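/- Let P, Q ∈ L¹(0,π) be complex-valued, let ρ > 0, and suppose lim_{h→0⁺} ( ∫₀^h Q(x) dx ) / h^ρ = ν with ν ≠ 0. Fix 0 < ε < π/10. Then, uniformly for λ in the sector Ω_ε⁺, as |Im λ| → ∞: (i) i e^{−iπλ} q₀(π,λ) = ν λ e^{−iπλ} Γ(ρ+1) / ( 2^ρ ((Re λ)² + (Im λ)²)^{(ρ+1)/2} ) · e^{i(ρ+1) arctan(Re λ / Im λ)} + e^{π|Im λ|} o(1) / |Im λ|^ρ; and (ii) i e^{−iπλ} ∑_{n=1}^∞ qₙ(π,λ) = e^{π|Im λ|} o(1) / |Im λ|^ρ. -/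

import Mathlib

/-!
Write `F(s) = ∫₀ˢ Q`, `y = Im λ`. In the sector `y > 0` (for `λ` large) and `|λ| ≤ y / sin ε`, and
`|e^{-iπλ}| = e^{πy}` cancels the weight `e^{-πy}` (`norm_weight`), so one has to show that the
remaining factors are `o(y^{-ρ})`.

**The leading term.** Integration by parts (`integral_exp_mul_eq`, via Fubini since `F` is only
absolutely continuous) gives `q₀(t) = e^{2iλt} F(t) - 2iλ ∫₀ᵗ e^{2iλs} F(s) ds`. Replacing `F` by
`ν s^ρ` on `(0, ∞)` produces the Laplace transform `∫₀^∞ e^{2iλs} s^ρ ds = Γ(ρ+1) (-2iλ)^{-(ρ+1)}`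
(`gamma_complex`, obtained from the case of a real parameter by the identity theorem), which in
polar form is the stated main term (`gamma_term`). The error `E(s) = 1_{s ≤ π} F(s) - ν s^ρ`
(`primErr`) is at most `η s^ρ` for `s < h` and at most `K s^ρ` everywhere, so
`|E(s)| e^{-2ys} ≤ η s^ρ e^{-2ys} + K e^{-hy} s^ρ e^{-ys}`; integrating, its contribution is
`o(y^{-ρ})` (`norm_integral_primErr_le`).

**The series.** From the same formula `|q₀(t, λ)| ≤ M y^{-ρ}` uniformly in `t ∈ [0, π]`
(`qIter_zero_bound`). Each further iteration multiplies the supremum norm by at most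
`a(y) = ∫₀^π ∫₀ᵗ e^{-2y(t-s)} |Q(t)| |P(s)| ds dt` (`kernelMass`, `qIter_bound`), which tends to `0`
by dominated convergence (`tendsto_kernelMass`). Summing the geometric series gives
`∑_{n ≥ 1} |qₙ(π)| ≤ M y^{-ρ} a / (1 - a) = o(y^{-ρ})`.
-/

open MeasureTheory Real intervalIntegral

/-- The iterated integrals `qₙ(t,λ)`. -/
noncomputable def qIter (P Q : ℝ → ℂ) (lam : ℂ) : ℕ → ℝ → ℂ
  | 0, t => ∫ s in (0 : ℝ)..t, Complex.exp (2 * Complex.I * lam * (s : ℂ)) * Q s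
  | n + 1, t => ∫ t₁ in (0 : ℝ)..t,
      Complex.exp (2 * Complex.I * lam * (t₁ : ℂ)) * Q t₁ *
        ∫ t₂ in (0 : ℝ)..t₁,
          Complex.exp (-(2 * Complex.I * lam * (t₂ : ℂ))) * P t₂ * qIter P Q lam n t₂

/-! ### Integration by parts -/

lemma exp_norm_aux (lam : ℂ) (s : ℝ) :
    ‖Complex.exp (2 * Complex.I * lam * (s : ℂ))‖ = Real.exp (-(2 * lam.im) * s) := by
  rw [Complex.norm_exp]; congr 1; simp

lemma exp_norm_aux' (lam : ℂ) (s : ℝ) :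
    ‖Complex.exp (-(2 * Complex.I * lam * (s : ℂ)))‖ = Real.exp (2 * lam.im * s) := by
  rw [Complex.norm_exp]; congr 1; simp

/-- Integration by parts for `e^{cs}` against a merely integrable `Q`: Fubini on the triangle
`0 < s ≤ u ≤ t` for the kernel `Q(s) e^{cu}`. -/
lemma integral_exp_mul_eq (Q : ℝ → ℂ) (c : ℂ) (hc : c ≠ 0) (t : ℝ) (ht : 0 ≤ t)
    (hQ : IntervalIntegrable Q volume 0 t) :
    ∫ s in (0 : ℝ)..t, Complex.exp (c * s) * Q s =
      Complex.exp (c * t) * (∫ s in (0 : ℝ)..t, Q s) -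
        c * ∫ u in (0 : ℝ)..t, Complex.exp (c * u) * ∫ s in (0 : ℝ)..u, Q s := by
  have hce : Continuous fun u : ℝ => Complex.exp (c * u) := by fun_prop
  have hQ' : IntegrableOn Q (Set.Ioc 0 t) := (intervalIntegrable_iff_integrableOn_Ioc_of_le ht).1 hQ
  have hE : IntegrableOn (fun u : ℝ => Complex.exp (c * u)) (Set.Ioc 0 t) :=
    (intervalIntegrable_iff_integrableOn_Ioc_of_le ht).1 (hce.intervalIntegrable 0 t)
  have hset : MeasurableSet {p : ℝ × ℝ | p.1 ≤ p.2} := measurableSet_le measurable_fst measurable_snd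
  have hInt := (Integrable.mul_prod hQ' hE).indicator hset
  have hswap := integral_integral_swap (μ := volume.restrict (Set.Ioc 0 t))
    (ν := volume.restrict (Set.Ioc 0 t))
    (f := fun s u => Set.indicator {p : ℝ × ℝ | p.1 ≤ p.2}
      (fun z : ℝ × ℝ => Q z.1 * Complex.exp (c * z.2)) (s, u)) hInt
  have hL : ∀ s ∈ Set.Ioc 0 t, (∫ u in Set.Ioc 0 t, Set.indicator {p : ℝ × ℝ | p.1 ≤ p.2}
      (fun z : ℝ × ℝ => Q z.1 * Complex.exp (c * z.2)) (s, u)) =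
      c⁻¹ * (Q s * Complex.exp (c * t) - Complex.exp (c * s) * Q s) := by
    intro s hs
    have h1 : (fun u : ℝ => Set.indicator {p : ℝ × ℝ | p.1 ≤ p.2}
        (fun z : ℝ × ℝ => Q z.1 * Complex.exp (c * z.2)) (s, u)) =
        Set.indicator (Set.Ici s) (fun u : ℝ => Q s * Complex.exp (c * u)) := by
      ext u; simp [Set.indicator_apply]
    have h2 : Set.Ioc 0 t ∩ Set.Ici s = Set.Icc s t := by
      ext u; simp only [Set.mem_inter_iff, Set.mem_Ioc, Set.mem_Ici, Set.mem_Icc]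
      have := hs.1
      constructor <;> intro h <;> grind
    rw [h1, setIntegral_indicator measurableSet_Ici, h2, integral_Icc_eq_integral_Ioc,
      ← intervalIntegral.integral_of_le hs.2, intervalIntegral.integral_const_mul,
      integral_exp_mul_complex hc]
    field_simp
  have hR : ∀ u ∈ Set.Ioc 0 t, (∫ s in Set.Ioc 0 t, Set.indicator {p : ℝ × ℝ | p.1 ≤ p.2}
      (fun z : ℝ × ℝ => Q z.1 * Complex.exp (c * z.2)) (s, u)) =
      Complex.exp (c * u) * ∫ s in (0 : ℝ)..u, Q s := by
    intro u hu
    have h1 : (fun s : ℝ => Set.indicator {p : ℝ × ℝ | p.1 ≤ p.2}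
        (fun z : ℝ × ℝ => Q z.1 * Complex.exp (c * z.2)) (s, u)) =
        Set.indicator (Set.Iic u) (fun s : ℝ => Q s * Complex.exp (c * u)) := by
      ext s; simp [Set.indicator_apply]
    have h2 : Set.Ioc 0 t ∩ Set.Iic u = Set.Ioc 0 u := by
      ext s; simp only [Set.mem_inter_iff, Set.mem_Ioc, Set.mem_Iic]
      have := hu.2
      constructor <;> intro h <;> grind
    rw [h1, setIntegral_indicator measurableSet_Iic, h2,
      ← intervalIntegral.integral_of_le hu.1.le, intervalIntegral.integral_mul_const, mul_comm]
  rw [setIntegral_congr_fun measurableSet_Ioc hL, setIntegral_congr_fun measurableSet_Ioc hR,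
    ← intervalIntegral.integral_of_le ht, ← intervalIntegral.integral_of_le ht,
    intervalIntegral.integral_const_mul, intervalIntegral.integral_sub (hQ.mul_const _)
      (hQ.continuousOn_mul hce.continuousOn), intervalIntegral.integral_mul_const] at hswap
  rw [← hswap]
  field_simp
  ring

/-! ### Laplace transforms of powers -/

lemma rpow_exp_bound (ρ : ℝ) (hρ : 0 < ρ) (x : ℝ) (hx : 0 ≤ x) :
    x ^ ρ * Real.exp (-(2 * x)) ≤ ρ ^ ρ := by
  -- `z ≤ e^z` at `z = x / ρ`, raised to the power `ρ`, gives `x^ρ ≤ ρ^ρ e^x`.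
  have h1 : x ≤ ρ * Real.exp (x / ρ) := by
    have := Real.add_one_le_exp (x / ρ)
    have h2 : x = ρ * (x / ρ) := by field_simp
    nlinarith
  have h3 : x ^ ρ ≤ ρ ^ ρ * Real.exp x := by
    calc x ^ ρ ≤ (ρ * Real.exp (x / ρ)) ^ ρ := Real.rpow_le_rpow hx h1 hρ.le
      _ = _ := by
        rw [Real.mul_rpow hρ.le (Real.exp_pos _).le, ← Real.exp_mul]
        congr 2; field_simp
  calc x ^ ρ * Real.exp (-(2 * x)) ≤ (ρ ^ ρ * Real.exp x) * Real.exp (-(2 * x)) := by gcongr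
    _ = ρ ^ ρ * Real.exp (-x) := by rw [mul_assoc, ← Real.exp_add]; ring_nf
    _ ≤ ρ ^ ρ * 1 := by gcongr; exact Real.exp_le_one_iff.2 (by linarith)
    _ = _ := mul_one _

lemma laplace_integrable (ρ b : ℝ) (hρ : 0 < ρ) (hb : 0 < b) :
    IntegrableOn (fun s : ℝ => s ^ ρ * Real.exp (-b * s)) (Set.Ioi 0) := by
  simpa using integrableOn_rpow_mul_exp_neg_mul_rpow (p := 1) (s := ρ) (b := b)
    (by linarith) one_pos hb

lemma laplace_eq (ρ b : ℝ) (hρ : 0 < ρ) (hb : 0 < b) :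
    ∫ s in Set.Ioi (0 : ℝ), s ^ ρ * Real.exp (-b * s) = Real.Gamma (ρ + 1) / b ^ (ρ + 1) := by
  have := Real.integral_rpow_mul_exp_neg_mul_Ioi (a := ρ + 1) (r := b) (by linarith) hb
  rw [add_sub_cancel_right] at this
  simp_rw [neg_mul]
  rw [this, one_div, Real.inv_rpow hb.le]
  ring

/-- The Gamma integral with a complex parameter `r` in the right half-plane. Both sides are
holomorphic there and agree for real `r > 0`, so the identity theorem applies. -/
lemma gamma_complex (ρ : ℝ) (hρ : 0 < ρ) (r : ℂ) (hr : 0 < r.re) :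
    ∫ s in Set.Ioi (0 : ℝ), ((s ^ ρ : ℝ) : ℂ) * Complex.exp (-r * s) =
      (1 / r) ^ ((ρ : ℂ) + 1) * Complex.Gamma ((ρ : ℂ) + 1) := by
  set U : Set ℂ := {z | 0 < z.re} with hU
  have hUo : IsOpen U := isOpen_lt continuous_const Complex.continuous_re
  have hUc : IsPreconnected U := (convex_halfSpace_re_gt 0).isPreconnected
  have hnorm : ∀ (z : ℂ) (s : ℝ), ‖Complex.exp (-z * s)‖ = Real.exp (-z.re * s) := by
    intro z s; rw [Complex.norm_exp]; congr 1; simp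
  have hmeas : ∀ z : ℂ, AEStronglyMeasurable
      (fun s : ℝ => ((s ^ ρ : ℝ) : ℂ) * Complex.exp (-z * s)) (volume.restrict (Set.Ioi 0)) := by
    intro z
    refine Measurable.aestronglyMeasurable ?_
    fun_prop
  have hInt : ∀ z ∈ U, IntegrableOn
      (fun s : ℝ => ((s ^ ρ : ℝ) : ℂ) * Complex.exp (-z * s)) (Set.Ioi 0) := by
    intro z hz
    refine Integrable.mono' (laplace_integrable ρ z.re hρ hz) (hmeas z) ?_
    refine (ae_restrict_iff' measurableSet_Ioi).2 (Filter.Eventually.of_forall fun s hs => ?_)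
    have hs' : (0 : ℝ) < s := hs
    rw [norm_mul, hnorm, Complex.norm_real, Real.norm_of_nonneg (by positivity)]
  have hL : DifferentiableOn ℂ
      (fun z : ℂ => ∫ s in Set.Ioi (0 : ℝ), ((s ^ ρ : ℝ) : ℂ) * Complex.exp (-z * s)) U := by
    intro z₀ hz₀
    have hz₀' : 0 < z₀.re := hz₀
    have key := hasDerivAt_integral_of_dominated_loc_of_deriv_le
      (μ := volume.restrict (Set.Ioi (0 : ℝ)))
      (F := fun (z : ℂ) (s : ℝ) => ((s ^ ρ : ℝ) : ℂ) * Complex.exp (-z * s))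
      (F' := fun (z : ℂ) (s : ℝ) => ((s ^ ρ : ℝ) : ℂ) * (Complex.exp (-z * s) * (-s)))
      (x₀ := z₀) (s := Metric.ball z₀ (z₀.re / 2))
      (bound := fun s : ℝ => s ^ (ρ + 1) * Real.exp (-(z₀.re / 2) * s))
      (Metric.ball_mem_nhds _ (by positivity))
      (Filter.Eventually.of_forall hmeas) (hInt z₀ hz₀)
      (Measurable.aestronglyMeasurable (by fun_prop))
      ((ae_restrict_iff' measurableSet_Ioi).2 (Filter.Eventually.of_forall fun s hs z hz => ?_))
      (laplace_integrable (ρ + 1) (z₀.re / 2) (by linarith) (by positivity))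
      (Filter.Eventually.of_forall fun s z hz => ?_)
    · exact key.2.differentiableAt.differentiableWithinAt
    · have hs' : (0 : ℝ) < s := hs
      have hre : z₀.re / 2 ≤ z.re := by
        have h1 := Complex.abs_re_le_norm (z - z₀)
        rw [Metric.mem_ball, dist_eq_norm] at hz
        rw [Complex.sub_re] at h1
        have := (abs_le.1 (h1.trans hz.le)).1
        linarith
      rw [norm_mul, norm_mul, hnorm, Complex.norm_real, Real.norm_of_nonneg (by positivity),
        norm_neg, Complex.norm_real, Real.norm_of_nonneg hs'.le, Real.rpow_add hs', Real.rpow_one,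
        mul_comm (Real.exp _) s, ← mul_assoc]
      gcongr
    · have h : HasDerivAt (fun z : ℂ => -z * (s : ℂ)) (-(s : ℂ)) z := by
        simpa using ((hasDerivAt_id z).neg.mul_const (s : ℂ))
      exact h.cexp.const_mul _
  have hR : DifferentiableOn ℂ
      (fun z : ℂ => (1 / z) ^ ((ρ : ℂ) + 1) * Complex.Gamma ((ρ : ℂ) + 1)) U := by
    intro z hz
    have hz' : 0 < z.re := hz
    have hz0 : z ≠ 0 := fun h => by simp [h] at hz'
    have hslit : 1 / z ∈ Complex.slitPlane := by
      left
      rw [one_div, Complex.inv_re]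
      exact div_pos hz' (Complex.normSq_pos.2 hz0)
    refine DifferentiableAt.differentiableWithinAt ?_
    refine DifferentiableAt.mul_const (DifferentiableAt.cpow_const ?_ hslit) _
    exact (differentiableAt_const _).div differentiableAt_id hz0
  have hreal : ∀ x : ℝ, 0 < x →
      ∫ s in Set.Ioi (0 : ℝ), ((s ^ ρ : ℝ) : ℂ) * Complex.exp (-(x : ℂ) * s) =
      (1 / (x : ℂ)) ^ ((ρ : ℂ) + 1) * Complex.Gamma ((ρ : ℂ) + 1) := by
    intro x hx
    rw [← Complex.integral_cpow_mul_exp_neg_mul_Ioi (by simp; linarith) hx]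
    refine setIntegral_congr_fun measurableSet_Ioi fun s hs => ?_
    have hs' : (0 : ℝ) < s := hs
    simp only [add_sub_cancel_right]
    rw [Complex.ofReal_cpow hs'.le, neg_mul]
  have hfreq : ∃ᶠ z in nhdsWithin (1 : ℂ) {1}ᶜ,
      (fun z : ℂ => ∫ s in Set.Ioi (0 : ℝ), ((s ^ ρ : ℝ) : ℂ) * Complex.exp (-z * s)) z =
      (fun z : ℂ => (1 / z) ^ ((ρ : ℂ) + 1) * Complex.Gamma ((ρ : ℂ) + 1)) z := by
    have ht : Filter.Tendsto (fun x : ℝ => (x : ℂ)) (nhdsWithin (1 : ℝ) {1}ᶜ)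
        (nhdsWithin (1 : ℂ) {1}ᶜ) := by
      refine tendsto_nhdsWithin_of_tendsto_nhds_of_eventually_within _ ?_ ?_
      · have := (Complex.continuous_ofReal.tendsto (1 : ℝ)).mono_left
          (nhdsWithin_le_nhds (s := ({1}ᶜ : Set ℝ)))
        simpa using this
      · filter_upwards [self_mem_nhdsWithin] with x hx
        simpa using hx
    refine ht.frequently (Filter.Eventually.frequently ?_)
    filter_upwards [nhdsWithin_le_nhds (lt_mem_nhds (zero_lt_one (α := ℝ)))] with x hx
    exact hreal x hx
  exact (hL.analyticOnNhd hUo).eqOn_of_preconnected_of_frequently_eq (hR.analyticOnNhd hUo) hUc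
    (show (1 : ℂ) ∈ U by simp [hU]) hfreq hr

/-- The Laplace transform of `s^ρ` at `-2iλ`, with `(-iλ)^{-(ρ+1)}` written in polar form: for
`Im λ > 0` the argument of `-iλ` is `-arctan (Re λ / Im λ)`. -/
lemma gamma_term (ρ : ℝ) (hρ : 0 < ρ) (lam : ℂ) (hy : 0 < lam.im) :
    2 * ∫ s in Set.Ioi (0 : ℝ), Complex.exp (2 * Complex.I * lam * s) * ((s ^ ρ : ℝ) : ℂ) =
      ((Real.Gamma (ρ + 1) /
                  (2 ^ ρ * (lam.re ^ 2 + lam.im ^ 2) ^ ((ρ + 1) / 2)) : ℝ) : ℂ) *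
              Complex.exp (Complex.I * ((ρ : ℂ) + 1) *
                (Real.arctan (lam.re / lam.im) : ℂ)) := by
  set r : ℂ := -(2 * Complex.I * lam) with hr
  have hrre : 0 < r.re := by simp [hr]; linarith
  have h1 := gamma_complex ρ hρ r hrre
  have h2 : ∫ s in Set.Ioi (0 : ℝ), Complex.exp (2 * Complex.I * lam * s) * ((s ^ ρ : ℝ) : ℂ) =
      ∫ s in Set.Ioi (0 : ℝ), ((s ^ ρ : ℝ) : ℂ) * Complex.exp (-r * s) := by
    simp only [hr, neg_neg, mul_comm]
  rw [h2, h1]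
  set D : ℝ := lam.re ^ 2 + lam.im ^ 2 with hD
  have hDpos : 0 < D := by positivity
  set θ := Real.arctan (lam.re / lam.im) with hθ
  have hsq : Real.sqrt (1 + (lam.re / lam.im) ^ 2) = Real.sqrt D / lam.im := by
    rw [show 1 + (lam.re / lam.im) ^ 2 = D / lam.im ^ 2 by rw [hD]; field_simp; ring,
      Real.sqrt_div hDpos.le, Real.sqrt_sq hy.le]
  have hsD : 0 < Real.sqrt D := Real.sqrt_pos.2 hDpos
  have hcos : Real.cos θ = lam.im / Real.sqrt D := by
    rw [hθ, Real.cos_arctan, hsq]; field_simp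
  have hsin : Real.sin θ = lam.re / Real.sqrt D := by
    rw [hθ, Real.sin_arctan, hsq]; field_simp
  have hDD : Real.sqrt D * Real.sqrt D = D := Real.mul_self_sqrt hDpos.le
  -- Polar form: `1 / r = (2 √D)⁻¹ e^{iθ}`.
  have hw : 1 / r = Complex.exp (((-Real.log (2 * Real.sqrt D) : ℝ) : ℂ) + (θ : ℂ) * Complex.I) := by
    rw [Complex.exp_add, ← Complex.ofReal_exp, Real.exp_neg, Real.exp_log (by positivity),
      Complex.exp_mul_I, ← Complex.ofReal_cos, ← Complex.ofReal_sin, hcos, hsin]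
    have hr0 : r ≠ 0 := fun h => by simp [h] at hrre
    rw [div_eq_iff hr0]
    apply Complex.ext
    · simp [hr]; field_simp; rw [Real.sq_sqrt hDpos.le, hD]
    · simp [hr]; field_simp; ring
  have hlog : Complex.log (1 / r) = ((-Real.log (2 * Real.sqrt D) : ℝ) : ℂ) + (θ : ℂ) * Complex.I := by
    rw [hw, Complex.log_exp]
    · simp; linarith [Real.neg_pi_div_two_lt_arctan (lam.re / lam.im), Real.pi_pos]
    · simp; linarith [Real.arctan_lt_pi_div_two (lam.re / lam.im), Real.pi_pos]
  have hr0 : 1 / r ≠ 0 := by rw [hw]; exact Complex.exp_ne_zero _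
  have hpow : (2 * Real.sqrt D) ^ (ρ + 1) = 2 * (2 ^ ρ * D ^ ((ρ + 1) / 2)) := by
    rw [Real.mul_rpow two_pos.le hsD.le, Real.sqrt_eq_rpow, ← Real.rpow_mul hDpos.le,
      Real.rpow_add two_pos, Real.rpow_one]
    ring_nf
  have hreal : Complex.exp (((-Real.log (2 * Real.sqrt D) : ℝ) : ℂ) * (ρ + 1)) =
      (((2 * (2 ^ ρ * D ^ ((ρ + 1) / 2)))⁻¹ : ℝ) : ℂ) := by
    rw [← hpow, Real.rpow_def_of_pos (by positivity), ← Real.exp_neg]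
    push_cast; congr 1; ring
  rw [Complex.cpow_def_of_ne_zero hr0, hlog, add_mul, Complex.exp_add, hreal,
    show (ρ : ℂ) + 1 = ((ρ + 1 : ℝ) : ℂ) by push_cast; ring, Complex.Gamma_ofReal,
    show (θ : ℂ) * Complex.I * ((ρ + 1 : ℝ) : ℂ) = Complex.I * ((ρ + 1 : ℝ) : ℂ) * θ by ring]
  push_cast
  field_simp

/-! ### The iteration operator -/

/-- The factor `∫₀^π ∫₀ᵗ e^{-2y(t-s)} |Q(t)| |P(s)| ds dt` by which one step of the recursion for
`qₙ` multiplies the supremum norm on `[0, π]`, where `y = Im λ`. -/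
noncomputable def kernelMass (P Q : ℝ → ℂ) (y : ℝ) : ℝ :=
  ∫ t in (0 : ℝ)..Real.pi, Real.exp (-(2 * y) * t) * ‖Q t‖ *
    ∫ s in (0 : ℝ)..t, Real.exp (2 * y * s) * ‖P s‖

lemma intervalIntegrable_exp_mul_norm {P : ℝ → ℂ} (hP : IntervalIntegrable P volume 0 Real.pi)
    (c : ℝ) : IntervalIntegrable (fun s => Real.exp (c * s) * ‖P s‖) volume 0 Real.pi :=
  hP.norm.continuousOn_mul (by fun_prop)

lemma IntervalIntegrable.sub_pi {E : Type*} [NormedAddCommGroup E] {f : ℝ → E}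
    (hf : IntervalIntegrable f volume 0 Real.pi) {t : ℝ}
    (ht : t ∈ Set.Icc 0 Real.pi) : IntervalIntegrable f volume 0 t := by
  refine hf.mono_set ?_
  rw [Set.uIcc_of_le ht.1, Set.uIcc_of_le Real.pi_pos.le]
  exact Set.Icc_subset_Icc_right ht.2

lemma intervalIntegrable_kernel {P Q : ℝ → ℂ} (hP : IntervalIntegrable P volume 0 Real.pi)
    (hQ : IntervalIntegrable Q volume 0 Real.pi) (y : ℝ) :
    IntervalIntegrable (fun t => Real.exp (-(2 * y) * t) * ‖Q t‖ *
      ∫ s in (0 : ℝ)..t, Real.exp (2 * y * s) * ‖P s‖) volume 0 Real.pi :=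
  (intervalIntegrable_exp_mul_norm hQ _).mul_continuousOn
    (continuousOn_primitive_interval' (intervalIntegrable_exp_mul_norm hP _) Set.left_mem_uIcc)

lemma tendsto_kernelMass {P Q : ℝ → ℂ} (hP : IntervalIntegrable P volume 0 Real.pi)
    (hQ : IntervalIntegrable Q volume 0 Real.pi) :
    Filter.Tendsto (kernelMass P Q) Filter.atTop (nhds 0) := by
  have hfac : ∀ y t : ℝ, Real.exp (-(2 * y) * t) * ‖Q t‖ *
      (∫ s in (0 : ℝ)..t, Real.exp (2 * y * s) * ‖P s‖) =
      ‖Q t‖ * ∫ s in (0 : ℝ)..t, Real.exp (-(2 * (t - s)) * y) * ‖P s‖ := by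
    intro y t
    rw [mul_comm (Real.exp _), mul_assoc, ← intervalIntegral.integral_const_mul]
    congr 2
    ext s
    rw [← mul_assoc, ← Real.exp_add]
    ring_nf
  have hzero : (∫ _t in (0 : ℝ)..Real.pi, (0 : ℝ)) = 0 := by simp
  rw [← hzero]
  refine intervalIntegral.tendsto_integral_filter_of_dominated_convergence
    (fun t => ‖Q t‖ * ∫ s in (0 : ℝ)..Real.pi, ‖P s‖) ?_ ?_ (hQ.norm.mul_const _) ?_
  · refine Filter.Eventually.of_forall fun y => ?_
    exact (intervalIntegrable_iff.1 (intervalIntegrable_kernel hP hQ y)).aestronglyMeasurable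
  · filter_upwards [Filter.eventually_ge_atTop 0] with y hy
    refine Filter.Eventually.of_forall fun t ht => ?_
    rw [Set.uIoc_of_le Real.pi_pos.le] at ht
    rw [hfac, Real.norm_of_nonneg (mul_nonneg (norm_nonneg _)
      (intervalIntegral.integral_nonneg ht.1.le fun s _ => by positivity))]
    gcongr
    have h1 : IntervalIntegrable (fun s => Real.exp (-(2 * (t - s)) * y) * ‖P s‖) volume 0 t :=
      (hP.sub_pi ⟨ht.1.le, ht.2⟩).norm.continuousOn_mul (by fun_prop)
    calc _ ≤ ∫ s in (0 : ℝ)..t, ‖P s‖ := by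
          refine intervalIntegral.integral_mono_on ht.1.le h1
            (hP.sub_pi ⟨ht.1.le, ht.2⟩).norm fun s hs => ?_
          have : Real.exp (-(2 * (t - s)) * y) ≤ 1 :=
            Real.exp_le_one_iff.2 (by nlinarith [hs.2])
          nlinarith [norm_nonneg (P s)]
      _ ≤ _ := by
          refine intervalIntegral.integral_mono_interval le_rfl ht.1.le ht.2
            (Filter.Eventually.of_forall fun s => norm_nonneg _) hP.norm
  · refine Filter.Eventually.of_forall fun t ht => ?_
    rw [Set.uIoc_of_le Real.pi_pos.le] at ht
    simp_rw [hfac]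
    have hPt := (hP.sub_pi ⟨ht.1.le, ht.2⟩)
    suffices hin : Filter.Tendsto
        (fun y : ℝ => ∫ s in (0 : ℝ)..t, Real.exp (-(2 * (t - s)) * y) * ‖P s‖)
        Filter.atTop (nhds (∫ _s in (0 : ℝ)..t, (0 : ℝ))) by
      simpa using hin.const_mul ‖Q t‖
    refine intervalIntegral.tendsto_integral_filter_of_dominated_convergence
      (fun s => ‖P s‖) ?_ ?_ hPt.norm ?_
    · refine Filter.Eventually.of_forall fun y => ?_
      exact (intervalIntegrable_iff.1 (hPt.norm.continuousOn_mul (by fun_prop))).aestronglyMeasurable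
    · filter_upwards [Filter.eventually_ge_atTop 0] with y hy
      refine Filter.Eventually.of_forall fun s hs => ?_
      rw [Set.uIoc_of_le ht.1.le] at hs
      rw [Real.norm_of_nonneg (by positivity)]
      have : Real.exp (-(2 * (t - s)) * y) ≤ 1 :=
        Real.exp_le_one_iff.2 (by nlinarith [hs.2])
      nlinarith [norm_nonneg (P s)]
    · have hne : ∀ᵐ s : ℝ, s ≠ t := by simp [ae_iff]
      filter_upwards [hne] with s hst hs
      rw [Set.uIoc_of_le ht.1.le] at hs
      have hlt : s < t := lt_of_le_of_ne hs.2 hst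
      have h1 : Filter.Tendsto (fun y : ℝ => Real.exp (-(2 * (t - s)) * y)) Filter.atTop (nhds 0) :=
        Real.tendsto_exp_atBot.comp
          ((Filter.tendsto_const_mul_atBot_of_neg (by linarith)).2 Filter.tendsto_id)
      simpa using h1.mul_const ‖P s‖

/-- Only the majorants need to be integrable for these estimates, so no measurability of the
`qₙ` is required. -/
lemma qIter_bound {P Q : ℝ → ℂ} (hP : IntervalIntegrable P volume 0 Real.pi)
    (hQ : IntervalIntegrable Q volume 0 Real.pi) (lam : ℂ) (M : ℝ)
    (hM : ∀ t ∈ Set.Icc 0 Real.pi, ‖qIter P Q lam 0 t‖ ≤ M) (n : ℕ) :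
    ∀ t ∈ Set.Icc 0 Real.pi, ‖qIter P Q lam n t‖ ≤ M * kernelMass P Q lam.im ^ n := by
  induction n with
  | zero => simpa using hM
  | succ n ih =>
    intro t ht
    set B := M * kernelMass P Q lam.im ^ n with hB
    have hB0 : 0 ≤ B := (norm_nonneg _).trans (ih 0 ⟨le_rfl, Real.pi_pos.le⟩)
    have hker := intervalIntegrable_kernel hP hQ lam.im
    have hin : ∀ t₁ ∈ Set.Icc 0 Real.pi, ‖∫ t₂ in (0 : ℝ)..t₁,
        Complex.exp (-(2 * Complex.I * lam * (t₂ : ℂ))) * P t₂ * qIter P Q lam n t₂‖ ≤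
        (∫ s in (0 : ℝ)..t₁, Real.exp (2 * lam.im * s) * ‖P s‖) * B := by
      intro t₁ ht₁
      rw [← intervalIntegral.integral_mul_const]
      refine intervalIntegral.norm_integral_le_of_norm_le ht₁.1
        (Filter.Eventually.of_forall fun s hs => ?_)
        (((intervalIntegrable_exp_mul_norm hP _).sub_pi ht₁).mul_const _)
      rw [norm_mul, norm_mul, exp_norm_aux']
      gcongr
      exact ih s ⟨hs.1.le, hs.2.trans ht₁.2⟩
    calc ‖qIter P Q lam (n + 1) t‖
        ≤ ∫ t₁ in (0 : ℝ)..t, (Real.exp (-(2 * lam.im) * t₁) * ‖Q t₁‖ *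
            ∫ s in (0 : ℝ)..t₁, Real.exp (2 * lam.im * s) * ‖P s‖) * B := by
          rw [qIter]
          refine intervalIntegral.norm_integral_le_of_norm_le ht.1
            (Filter.Eventually.of_forall fun s hs => ?_) ((hker.sub_pi ht).mul_const _)
          rw [norm_mul, norm_mul, exp_norm_aux, mul_assoc _ _ B]
          gcongr
          exact hin s ⟨hs.1.le, hs.2.trans ht.2⟩
      _ = (∫ t₁ in (0 : ℝ)..t, Real.exp (-(2 * lam.im) * t₁) * ‖Q t₁‖ *
            ∫ s in (0 : ℝ)..t₁, Real.exp (2 * lam.im * s) * ‖P s‖) * B :=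
          intervalIntegral.integral_mul_const _ _
      _ ≤ kernelMass P Q lam.im * B := by
          gcongr
          refine intervalIntegral.integral_mono_interval le_rfl ht.1 ht.2 ?_ hker
          refine (ae_restrict_iff' measurableSet_Ioc).2 (Filter.Eventually.of_forall fun s hs => ?_)
          exact mul_nonneg (by positivity)
            (intervalIntegral.integral_nonneg hs.1.le fun s _ => by positivity)
      _ = M * kernelMass P Q lam.im ^ (n + 1) := by rw [hB]; ring

lemma kernelMass_nonneg (P Q : ℝ → ℂ) (y : ℝ) : 0 ≤ kernelMass P Q y :=
  intervalIntegral.integral_nonneg Real.pi_pos.le fun s hs => mul_nonneg (by positivity)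
    (intervalIntegral.integral_nonneg hs.1 fun s _ => by positivity)

/-! ### The error in the primitive -/

/-- The error `1_{s ≤ π} ∫₀ˢ Q - ν s^ρ` made in replacing the primitive of `Q`, cut off at `π`,
by its leading power on the half-line. -/
noncomputable def primErr (Q : ℝ → ℂ) (ρ : ℝ) (ν : ℂ) (s : ℝ) : ℂ :=
  Set.indicator (Set.Iic Real.pi) (fun s => ∫ x in (0 : ℝ)..s, Q x) s - ν * ((s ^ ρ : ℝ) : ℂ)

/-- The limit hypothesis makes the error small relative to `s^ρ` near `0`; away from `0` the
primitive is bounded by `∫₀^π ‖Q‖`, hence by a multiple of `s^ρ`. -/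
lemma primErr_bounds {Q : ℝ → ℂ} (hQ : IntervalIntegrable Q volume 0 Real.pi)
    {ρ : ℝ} (hρ : 0 < ρ) {ν : ℂ}
    (hlim : Filter.Tendsto
      (fun h : ℝ => (∫ x in (0 : ℝ)..h, Q x) / ((h ^ ρ : ℝ) : ℂ))
      (nhdsWithin 0 (Set.Ioi 0)) (nhds ν)) {η : ℝ} (hη : 0 < η) :
    ∃ h > 0, ∃ K ≥ 0, ∀ s > 0, (s < h → ‖primErr Q ρ ν s‖ ≤ η * s ^ ρ) ∧
      ‖primErr Q ρ ν s‖ ≤ K * s ^ ρ := by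
  have hev := (Metric.tendsto_nhds.1 hlim) η hη
  rw [Filter.Eventually, mem_nhdsGT_iff_exists_Ioo_subset] at hev
  obtain ⟨h₀, hh₀, hsub⟩ := hev
  have hh₀' : (0 : ℝ) < h₀ := hh₀
  set h := min h₀ Real.pi with hh
  have hhpos : 0 < h := lt_min hh₀' Real.pi_pos
  have hsmall : ∀ s > 0, s < h → ‖primErr Q ρ ν s‖ ≤ η * s ^ ρ := by
    intro s hs hsh
    have h1 := hsub ⟨hs, hsh.trans_le (min_le_left _ _)⟩
    have hsp : 0 < s ^ ρ := Real.rpow_pos_of_pos hs ρ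
    have hsc : ((s ^ ρ : ℝ) : ℂ) ≠ 0 := Complex.ofReal_ne_zero.2 hsp.ne'
    simp only [Set.mem_ofPred_eq, dist_eq_norm] at h1
    have hmem : s ∈ Set.Iic Real.pi := (hsh.trans_le (min_le_right _ _)).le
    rw [primErr, Set.indicator_of_mem hmem]
    calc ‖(∫ x in (0 : ℝ)..s, Q x) - ν * ((s ^ ρ : ℝ) : ℂ)‖
        = ‖((∫ x in (0 : ℝ)..s, Q x) / ((s ^ ρ : ℝ) : ℂ) - ν) * ((s ^ ρ : ℝ) : ℂ)‖ := by
          rw [sub_mul, div_mul_cancel₀ _ hsc]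
      _ ≤ η * s ^ ρ := by
          rw [norm_mul, Complex.norm_real, Real.norm_of_nonneg hsp.le]
          gcongr
  set M := ∫ x in (0 : ℝ)..Real.pi, ‖Q x‖ with hM
  have hM0 : 0 ≤ M := intervalIntegral.integral_nonneg Real.pi_pos.le fun _ _ => norm_nonneg _
  refine ⟨h, hhpos, η + M / h ^ ρ + ‖ν‖, by positivity, fun s hs => ⟨hsmall s hs, ?_⟩⟩
  have hsp : 0 < s ^ ρ := Real.rpow_pos_of_pos hs ρ
  have hhp : 0 < h ^ ρ := Real.rpow_pos_of_pos hhpos ρ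
  rcases lt_or_ge s h with hsh | hsh
  · refine (hsmall s hs hsh).trans ?_
    gcongr
    have : 0 ≤ M / h ^ ρ := by positivity
    linarith [norm_nonneg ν]
  · have hind : ‖Set.indicator (Set.Iic Real.pi) (fun s => ∫ x in (0 : ℝ)..s, Q x) s‖ ≤ M := by
      by_cases hmem : s ∈ Set.Iic Real.pi
      · rw [Set.indicator_of_mem hmem]
        refine (intervalIntegral.norm_integral_le_integral_norm hs.le).trans ?_
        exact intervalIntegral.integral_mono_interval le_rfl hs.le hmem
          (Filter.Eventually.of_forall fun s => norm_nonneg _) hQ.norm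
      · rw [Set.indicator_of_notMem hmem]; simpa using hM0
    have hle : M ≤ M / h ^ ρ * s ^ ρ := by
      rw [div_mul_eq_mul_div, le_div_iff₀ hhp]
      gcongr
    calc ‖primErr Q ρ ν s‖ ≤ M + ‖ν‖ * s ^ ρ := by
          refine (norm_sub_le _ _).trans ?_
          rw [norm_mul, Complex.norm_real, Real.norm_of_nonneg hsp.le]
          gcongr
      _ ≤ (η + M / h ^ ρ + ‖ν‖) * s ^ ρ := by nlinarith

/-! ### The sector and the exponential weight -/

lemma sector_bounds {ε : ℝ} (hε : 0 < ε) (hε' : ε < Real.pi / 10) {lam : ℂ}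
    (h1 : ε ≤ lam.arg) (h2 : lam.arg ≤ Real.pi - ε) :
    0 ≤ lam.im ∧ ‖lam‖ ≤ (Real.sin ε)⁻¹ * lam.im := by
  have hsinε : 0 < Real.sin ε := Real.sin_pos_of_pos_of_lt_pi hε (by linarith [Real.pi_pos])
  have hs : Real.sin ε ≤ Real.sin lam.arg := by
    rcases le_total lam.arg (Real.pi / 2) with h | h
    · exact Real.sin_le_sin_of_le_of_le_pi_div_two (by linarith) h h1
    · rw [← Real.sin_pi_sub lam.arg]
      exact Real.sin_le_sin_of_le_of_le_pi_div_two (by linarith) (by linarith) (by linarith)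
  have him : lam.im = ‖lam‖ * Real.sin lam.arg := (Complex.norm_mul_sin_arg lam).symm
  have hle : ‖lam‖ * Real.sin ε ≤ lam.im := by rw [him]; gcongr
  refine ⟨(by positivity : 0 ≤ ‖lam‖ * Real.sin ε).trans hle, ?_⟩
  rw [inv_mul_eq_div, le_div_iff₀ hsinε]
  exact hle

lemma norm_weight (lam : ℂ) (hy : 0 ≤ lam.im) (Z : ℂ) (ρ : ℝ) :
    |lam.im| ^ ρ * Real.exp (-(Real.pi * |lam.im|)) *
      ‖Complex.I * Complex.exp (-(Complex.I * (Real.pi : ℂ) * lam)) * Z‖ = lam.im ^ ρ * ‖Z‖ := by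
  have : ‖Complex.exp (-(Complex.I * (Real.pi : ℂ) * lam))‖ = Real.exp (Real.pi * lam.im) := by
    rw [Complex.norm_exp]; congr 1; simp
  rw [abs_of_nonneg hy, norm_mul, norm_mul, Complex.norm_I, this, Real.exp_neg]
  field_simp

/-! ### Estimates for `q₀` -/

lemma scale_gamma (ρ : ℝ) (hρ : 0 < ρ) (y : ℝ) (hy : 0 < y) :
    y ^ ρ * (y * (Real.Gamma (ρ + 1) / (2 * y) ^ (ρ + 1))) ≤ Real.Gamma (ρ + 1) ∧
    y ^ ρ * (y * (Real.Gamma (ρ + 1) / y ^ (ρ + 1))) = Real.Gamma (ρ + 1) := by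
  have hG : 0 < Real.Gamma (ρ + 1) := Real.Gamma_pos_of_pos (by linarith)
  have hyp : 0 < y ^ (ρ + 1) := Real.rpow_pos_of_pos hy _
  have h2 : y ^ ρ * (y * (Real.Gamma (ρ + 1) / y ^ (ρ + 1))) = Real.Gamma (ρ + 1) := by
    rw [← mul_assoc, ← Real.rpow_add_one hy.ne']
    field_simp
  refine ⟨?_, h2⟩
  calc _ ≤ y ^ ρ * (y * (Real.Gamma (ρ + 1) / y ^ (ρ + 1))) := by
        gcongr
        linarith
    _ = _ := h2

lemma integrableOn_exp_mul_rpow (ρ : ℝ) (hρ : 0 < ρ) (lam : ℂ) (hy : 0 < lam.im) :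
    IntegrableOn (fun s : ℝ => Complex.exp (2 * Complex.I * lam * s) * ((s ^ ρ : ℝ) : ℂ))
      (Set.Ioi 0) := by
  refine Integrable.mono' (laplace_integrable ρ (2 * lam.im) hρ (by linarith))
    (Measurable.aestronglyMeasurable (by fun_prop)) ?_
  refine (ae_restrict_iff' measurableSet_Ioi).2 (Filter.Eventually.of_forall fun s hs => ?_)
  have hs' : (0 : ℝ) < s := hs
  rw [norm_mul, exp_norm_aux, Complex.norm_real, Real.norm_of_nonneg (by positivity), mul_comm]

/-- Splits the Laplace transform of the error into the part coming from the primitive of `Q`, which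
lives on `(0, π]`, and the full Gamma integral. -/
lemma integral_primErr {Q : ℝ → ℂ} (hQ : IntervalIntegrable Q volume 0 Real.pi)
    (ρ : ℝ) (hρ : 0 < ρ) (ν : ℂ) (lam : ℂ) (hy : 0 < lam.im) :
    ∫ s in Set.Ioi (0 : ℝ), Complex.exp (2 * Complex.I * lam * s) * primErr Q ρ ν s =
      (∫ s in (0 : ℝ)..Real.pi, Complex.exp (2 * Complex.I * lam * s) *
        ∫ x in (0 : ℝ)..s, Q x) -
      ν * ∫ s in Set.Ioi (0 : ℝ), Complex.exp (2 * Complex.I * lam * s) * ((s ^ ρ : ℝ) : ℂ) := by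
  have hset : Set.Ioi 0 ∩ Set.Iic Real.pi = Set.Ioc 0 Real.pi := Set.Ioi_inter_Iic
  set g : ℝ → ℂ := fun s => Complex.exp (2 * Complex.I * lam * s) * ∫ x in (0 : ℝ)..s, Q x with hg
  have hgi : IntervalIntegrable g volume 0 Real.pi := by
    refine ContinuousOn.intervalIntegrable ?_
    exact ContinuousOn.mul (by fun_prop) (continuousOn_primitive_interval' hQ Set.left_mem_uIcc)
  have hgi' : IntegrableOn (Set.indicator (Set.Iic Real.pi) g) (Set.Ioi 0) := by
    rw [IntegrableOn, integrable_indicator_iff measurableSet_Iic, IntegrableOn,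
      Measure.restrict_restrict measurableSet_Iic, Set.inter_comm, hset]
    exact (intervalIntegrable_iff_integrableOn_Ioc_of_le Real.pi_pos.le).1 hgi
  have heq : (fun s : ℝ => Complex.exp (2 * Complex.I * lam * s) * primErr Q ρ ν s) =
      fun s => Set.indicator (Set.Iic Real.pi) g s -
        ν * (Complex.exp (2 * Complex.I * lam * s) * ((s ^ ρ : ℝ) : ℂ)) := by
    ext s
    by_cases hs : s ∈ Set.Iic Real.pi
    · rw [primErr, Set.indicator_of_mem hs, Set.indicator_of_mem hs, hg]; ring
    · rw [primErr, Set.indicator_of_notMem hs, Set.indicator_of_notMem hs]; ring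
  rw [heq, integral_sub hgi' ((integrableOn_exp_mul_rpow ρ hρ lam hy).const_mul ν),
    setIntegral_indicator measurableSet_Iic, hset, MeasureTheory.integral_const_mul,
    ← intervalIntegral.integral_of_le Real.pi_pos.le]

/-- For `s ≥ h` half of the exponential decay is spent on the factor `e^{-h Im λ}`. -/
lemma norm_integral_primErr_le {Q : ℝ → ℂ} {ρ : ℝ} (hρ : 0 < ρ) {ν : ℂ} {η h K : ℝ}
    (hη : 0 < η) (hK : 0 ≤ K)
    (hE : ∀ s > 0, (s < h → ‖primErr Q ρ ν s‖ ≤ η * s ^ ρ) ∧ ‖primErr Q ρ ν s‖ ≤ K * s ^ ρ)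
    (lam : ℂ) (hy : 0 < lam.im) :
    ‖∫ s in Set.Ioi (0 : ℝ), Complex.exp (2 * Complex.I * lam * s) * primErr Q ρ ν s‖ ≤
      η * (Real.Gamma (ρ + 1) / (2 * lam.im) ^ (ρ + 1)) +
      K * Real.exp (-h * lam.im) * (Real.Gamma (ρ + 1) / lam.im ^ (ρ + 1)) := by
  have hi1 := (laplace_integrable ρ (2 * lam.im) hρ (by linarith)).const_mul η
  have hi2 := (laplace_integrable ρ lam.im hρ hy).const_mul (K * Real.exp (-h * lam.im))
  rw [← laplace_eq ρ (2 * lam.im) hρ (by linarith), ← laplace_eq ρ lam.im hρ hy,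
    ← MeasureTheory.integral_const_mul,
    ← MeasureTheory.integral_const_mul, ← integral_add hi1 hi2]
  refine norm_integral_le_of_norm_le (hi1.add hi2) ?_
  refine (ae_restrict_iff' measurableSet_Ioi).2 (Filter.Eventually.of_forall fun s hs => ?_)
  have hs' : (0 : ℝ) < s := hs
  have hsp : 0 < s ^ ρ := Real.rpow_pos_of_pos hs' ρ
  rw [norm_mul, exp_norm_aux]
  rcases lt_or_ge s h with hsh | hsh
  · have h1 := (hE s hs').1 hsh
    have : 0 ≤ K * Real.exp (-h * lam.im) * (s ^ ρ * Real.exp (-lam.im * s)) := by positivity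
    calc _ ≤ Real.exp (-(2 * lam.im) * s) * (η * s ^ ρ) := by gcongr
      _ ≤ _ := by linarith
  · have h1 := (hE s hs').2
    have : 0 ≤ η * (s ^ ρ * Real.exp (-(2 * lam.im) * s)) := by positivity
    have hexp : Real.exp (-(2 * lam.im) * s) ≤ Real.exp (-h * lam.im) * Real.exp (-lam.im * s) := by
      rw [← Real.exp_add]
      exact Real.exp_le_exp.2 (by nlinarith)
    calc _ ≤ (Real.exp (-h * lam.im) * Real.exp (-lam.im * s)) * (K * s ^ ρ) := by gcongr
      _ ≤ _ := by linarith

lemma qIter_zero_eq (P : ℝ → ℂ) {Q : ℝ → ℂ} (hQ : IntervalIntegrable Q volume 0 Real.pi)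
    (lam : ℂ) (hy : 0 < lam.im) {t : ℝ} (ht : t ∈ Set.Icc 0 Real.pi) :
    qIter P Q lam 0 t = Complex.exp (2 * Complex.I * lam * t) * (∫ s in (0 : ℝ)..t, Q s) -
        2 * Complex.I * lam * ∫ u in (0 : ℝ)..t, Complex.exp (2 * Complex.I * lam * u) *
          ∫ s in (0 : ℝ)..u, Q s := by
  rw [qIter]
  refine integral_exp_mul_eq Q _ ?_ t ht.1 (hQ.sub_pi ht)
  have : lam ≠ 0 := fun h => by simp [h] at hy
  simp [this]

/-- Uniform bound `|q₀(t, λ)| ≤ M (Im λ)^{-ρ}` on `[0, π]`, given `|∫₀ˢ Q| ≤ B s^ρ`. -/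
lemma qIter_zero_bound (P : ℝ → ℂ) {Q : ℝ → ℂ} (hQ : IntervalIntegrable Q volume 0 Real.pi)
    {ρ : ℝ} (hρ : 0 < ρ) {B κ : ℝ} (hB : 0 ≤ B)
    (hF : ∀ s ∈ Set.Icc 0 Real.pi, ‖∫ x in (0 : ℝ)..s, Q x‖ ≤ B * s ^ ρ)
    (lam : ℂ) (hy : 0 < lam.im) (hlam : ‖lam‖ ≤ κ * lam.im) {t : ℝ}
    (ht : t ∈ Set.Icc 0 Real.pi) :
    lam.im ^ ρ * ‖qIter P Q lam 0 t‖ ≤ B * (ρ ^ ρ + 2 * κ * Real.Gamma (ρ + 1)) := by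
  set y := lam.im with hydef
  have hκ : 0 ≤ κ := by
    by_contra hneg
    have := norm_nonneg lam
    nlinarith
  have hG : 0 < Real.Gamma (ρ + 1) := Real.Gamma_pos_of_pos (by linarith)
  have h1 : y ^ ρ * ‖Complex.exp (2 * Complex.I * lam * t) * ∫ s in (0 : ℝ)..t, Q s‖ ≤
      B * ρ ^ ρ := by
    rw [norm_mul, exp_norm_aux]
    calc _ ≤ y ^ ρ * (Real.exp (-(2 * y) * t) * (B * t ^ ρ)) := by gcongr; exact hF t ht
      _ = B * ((y * t) ^ ρ * Real.exp (-(2 * (y * t)))) := by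
        rw [Real.mul_rpow hy.le ht.1]; ring_nf
      _ ≤ _ := by
        gcongr
        exact rpow_exp_bound ρ hρ _ (mul_nonneg hy.le ht.1)
  have hInt := (laplace_integrable ρ (2 * y) hρ (by linarith))
  have hintt : IntervalIntegrable (fun s : ℝ => B * (s ^ ρ * Real.exp (-(2 * y) * s))) volume 0 t :=
    (intervalIntegrable_iff_integrableOn_Ioc_of_le ht.1).2
      ((hInt.mono_set Set.Ioc_subset_Ioi_self).const_mul B)
  have h2 : ‖∫ u in (0 : ℝ)..t, Complex.exp (2 * Complex.I * lam * u) *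
      ∫ s in (0 : ℝ)..u, Q s‖ ≤ B * (Real.Gamma (ρ + 1) / (2 * y) ^ (ρ + 1)) := by
    calc _ ≤ ∫ s in (0 : ℝ)..t, B * (s ^ ρ * Real.exp (-(2 * y) * s)) := by
          refine intervalIntegral.norm_integral_le_of_norm_le ht.1
            (Filter.Eventually.of_forall fun s hs => ?_) hintt
          rw [norm_mul, exp_norm_aux]
          calc _ ≤ Real.exp (-(2 * y) * s) * (B * s ^ ρ) := by
                gcongr; exact hF s ⟨hs.1.le, hs.2.trans ht.2⟩
            _ = _ := by ring
      _ ≤ _ := by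
          rw [intervalIntegral.integral_const_mul, ← laplace_eq ρ (2 * y) hρ (by linarith),
            intervalIntegral.integral_of_le ht.1]
          gcongr
          · refine (ae_restrict_iff' measurableSet_Ioi).2
              (Filter.Eventually.of_forall fun s hs => ?_)
            have hs' : (0 : ℝ) < s := hs
            simp only [Pi.zero_apply]
            positivity
          · exact Set.Ioc_subset_Ioi_self
  rw [qIter_zero_eq P hQ lam hy ht]
  have h3 : ‖2 * Complex.I * lam‖ ≤ 2 * (κ * y) := by simpa using hlam
  calc _ ≤ y ^ ρ * (‖Complex.exp (2 * Complex.I * lam * t) * ∫ s in (0 : ℝ)..t, Q s‖ +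
        2 * (κ * y) * (B * (Real.Gamma (ρ + 1) / (2 * y) ^ (ρ + 1)))) := by
        gcongr
        refine (norm_sub_le _ _).trans ?_
        gcongr
        rw [norm_mul]
        gcongr
    _ = y ^ ρ * ‖Complex.exp (2 * Complex.I * lam * t) * ∫ s in (0 : ℝ)..t, Q s‖ +
        2 * κ * B * (y ^ ρ * (y * (Real.Gamma (ρ + 1) / (2 * y) ^ (ρ + 1)))) := by ring
    _ ≤ B * ρ ^ ρ + 2 * κ * B * Real.Gamma (ρ + 1) := by
        gcongr
        exact (scale_gamma ρ hρ y hy).1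
    _ = _ := by ring

/-- Lemma 6: if `P, Q ∈ L¹(0,π)`, `ρ > 0`, and `lim_{h→0⁺} (∫₀^h Q)/h^ρ = ν ≠ 0`,
then uniformly in the sector `Ω_ε⁺ = {ε ≤ arg λ ≤ π - ε}`, as `|Im λ| → ∞`:
`i e^{-iπλ} q₀(π,λ) = νλ e^{-iπλ} Γ(ρ+1)/(2^ρ ((Re λ)²+(Im λ)²)^{(ρ+1)/2})
  · e^{i(ρ+1) arctan(Re λ/Im λ)} + e^{π|Im λ|} o(1)/|Im λ|^ρ` and
`i e^{-iπλ} ∑_{n=1}^∞ qₙ(π,λ) = e^{π|Im λ|} o(1)/|Im λ|^ρ`. -/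
theorem q0_asymptotics_upper_sector
    (P Q : ℝ → ℂ)
    (hP : IntervalIntegrable P MeasureTheory.volume 0 Real.pi)
    (hQ : IntervalIntegrable Q MeasureTheory.volume 0 Real.pi)
    (ρ : ℝ) (hρ : 0 < ρ) (ν : ℂ) (hν : ν ≠ 0)
    (hlim : Filter.Tendsto
      (fun h : ℝ => (∫ x in (0 : ℝ)..h, Q x) / ((h ^ ρ : ℝ) : ℂ))
      (nhdsWithin 0 (Set.Ioi 0)) (nhds ν))
    (ε : ℝ) (hε : 0 < ε) (hε' : ε < Real.pi / 10) :
    (∀ δ > (0 : ℝ), ∃ C : ℝ, ∀ lam : ℂ,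
      ε ≤ lam.arg → lam.arg ≤ Real.pi - ε → C ≤ |lam.im| →
        |lam.im| ^ ρ * Real.exp (-(Real.pi * |lam.im|)) *
          ‖(Complex.I * Complex.exp (-(Complex.I * (Real.pi : ℂ) * lam)) *
              qIter P Q lam 0 Real.pi) -
            (ν * lam * Complex.exp (-(Complex.I * (Real.pi : ℂ) * lam)) *
              ((Real.Gamma (ρ + 1) /
                  (2 ^ ρ * (lam.re ^ 2 + lam.im ^ 2) ^ ((ρ + 1) / 2)) : ℝ) : ℂ) *
              Complex.exp (Complex.I * ((ρ : ℂ) + 1) *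
                (Real.arctan (lam.re / lam.im) : ℂ)))‖ ≤ δ) ∧
    (∀ δ > (0 : ℝ), ∃ C : ℝ, ∀ lam : ℂ,
      ε ≤ lam.arg → lam.arg ≤ Real.pi - ε → C ≤ |lam.im| →
        |lam.im| ^ ρ * Real.exp (-(Real.pi * |lam.im|)) *
          ‖Complex.I * Complex.exp (-(Complex.I * (Real.pi : ℂ) * lam)) *
            ∑' n : ℕ, qIter P Q lam (n + 1) Real.pi‖ ≤ δ) := by
  have hπ := Real.pi_pos
  have hsinε : 0 < Real.sin ε := Real.sin_pos_of_pos_of_lt_pi hε (by linarith)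
  set κ := (Real.sin ε)⁻¹ with hκdef
  have hκ : 0 < κ := inv_pos.2 hsinε
  set G := Real.Gamma (ρ + 1) with hGdef
  have hG : 0 < G := Real.Gamma_pos_of_pos (by linarith)
  refine ⟨fun δ hδ => ?_, fun δ hδ => ?_⟩
  -- `η` is chosen so that the contribution `2 κ η G` of the range `s < h` is `δ / 3`.
  · set η := δ / (6 * κ * G) with hη
    have hη0 : 0 < η := by positivity
    obtain ⟨h, hh, K, hK, hE⟩ := primErr_bounds hQ hρ hlim hη0
    set F := ∫ s in (0 : ℝ)..Real.pi, Q s with hF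
    have ht1 : Filter.Tendsto (fun y : ℝ => y ^ ρ * Real.exp (-(2 * Real.pi) * y) * ‖F‖)
        Filter.atTop (nhds 0) := by
      simpa using (tendsto_rpow_mul_exp_neg_mul_atTop_nhds_zero ρ (2 * Real.pi)
        (by positivity)).mul_const ‖F‖
    have ht2 : Filter.Tendsto (fun y : ℝ => 2 * κ * G * K * Real.exp (-h * y))
        Filter.atTop (nhds 0) := by
      have h1 : Filter.Tendsto (fun y : ℝ => Real.exp (-h * y)) Filter.atTop (nhds 0) :=
        Real.tendsto_exp_atBot.comp
          ((Filter.tendsto_const_mul_atBot_of_neg (by linarith)).2 Filter.tendsto_id)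
      simpa using h1.const_mul (2 * κ * G * K)
    have hd : (0 : ℝ) < δ / 3 := by positivity
    obtain ⟨C, hC⟩ := Filter.eventually_atTop.1 (((ht1.eventually_le_const hd).and
      (ht2.eventually_le_const hd)).and (Filter.eventually_gt_atTop 0))
    refine ⟨C, fun lam ha1 ha2 hCl => ?_⟩
    obtain ⟨hy0, hnorm⟩ := sector_bounds hε hε' ha1 ha2
    rw [abs_of_nonneg hy0] at hCl
    obtain ⟨⟨hb1, hb2⟩, hy⟩ := hC _ hCl
    set E := ∫ s in Set.Ioi (0 : ℝ), Complex.exp (2 * Complex.I * lam * s) * primErr Q ρ ν s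
      with hEdef
    have hErr := norm_integral_primErr_le hρ hη0 hK hE lam hy
    have hIE := integral_primErr hQ ρ hρ ν lam hy
    have hGt := gamma_term ρ hρ lam hy
    have hq := qIter_zero_eq P hQ lam hy (t := Real.pi) ⟨hπ.le, le_rfl⟩
    have hrew : (Complex.I * Complex.exp (-(Complex.I * (Real.pi : ℂ) * lam)) *
              qIter P Q lam 0 Real.pi) -
            (ν * lam * Complex.exp (-(Complex.I * (Real.pi : ℂ) * lam)) *
              ((Real.Gamma (ρ + 1) /
                  (2 ^ ρ * (lam.re ^ 2 + lam.im ^ 2) ^ ((ρ + 1) / 2)) : ℝ) : ℂ) *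
              Complex.exp (Complex.I * ((ρ : ℂ) + 1) *
                (Real.arctan (lam.re / lam.im) : ℂ))) =
        Complex.I * Complex.exp (-(Complex.I * (Real.pi : ℂ) * lam)) *
          (Complex.exp (2 * Complex.I * lam * Real.pi) * F - 2 * Complex.I * lam * E) := by
      rw [mul_assoc _ (Complex.ofReal _) (Complex.exp (Complex.I * ((ρ : ℂ) + 1) * _)),
        ← hGt, hq, hEdef, hIE]
      -- The two Gamma integrals cancel because `I * (2 * I * lam) = -2 * lam`.
      linear_combination (2 * ν * lam * Complex.exp (-(Complex.I * (Real.pi : ℂ) * lam)) *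
        ∫ s in Set.Ioi (0 : ℝ), Complex.exp (2 * Complex.I * lam * s) * ((s ^ ρ : ℝ) : ℂ)) *
          (-Complex.I_sq)
    rw [hrew, norm_weight lam hy.le]
    set y := lam.im with hydef
    have h3 : ‖2 * Complex.I * lam‖ ≤ 2 * (κ * y) := by simpa using hnorm
    have hs := scale_gamma ρ hρ y hy
    calc y ^ ρ * ‖Complex.exp (2 * Complex.I * lam * Real.pi) * F - 2 * Complex.I * lam * E‖
        ≤ y ^ ρ * (Real.exp (-(2 * y) * Real.pi) * ‖F‖ + 2 * (κ * y) *
            (η * (G / (2 * y) ^ (ρ + 1)) + K * Real.exp (-h * y) * (G / y ^ (ρ + 1)))) := by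
          gcongr
          refine (norm_sub_le _ _).trans ?_
          rw [norm_mul, norm_mul, exp_norm_aux]
          gcongr
      _ = y ^ ρ * Real.exp (-(2 * Real.pi) * y) * ‖F‖ +
            2 * κ * η * (y ^ ρ * (y * (G / (2 * y) ^ (ρ + 1)))) +
            2 * κ * K * Real.exp (-h * y) * (y ^ ρ * (y * (G / y ^ (ρ + 1)))) := by
          rw [show -(2 * y) * Real.pi = -(2 * Real.pi) * y by ring]; ring
      _ ≤ δ / 3 + 2 * κ * η * G + δ / 3 := by
          rw [hs.2]
          have := mul_le_mul_of_nonneg_left hs.1 (by positivity : 0 ≤ 2 * κ * η)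
          linarith
      _ = δ := by rw [hη]; field_simp; ring
  · obtain ⟨h, hh, K, hK, hE⟩ := primErr_bounds hQ hρ hlim one_pos
    have hF : ∀ s ∈ Set.Icc 0 Real.pi, ‖∫ x in (0 : ℝ)..s, Q x‖ ≤ (K + ‖ν‖) * s ^ ρ := by
      intro s hs
      rcases hs.1.eq_or_lt with h0 | h0
      · rw [← h0]; simp [Real.zero_rpow hρ.ne']
      · have h1 := (hE s h0).2
        have hsp : 0 < s ^ ρ := Real.rpow_pos_of_pos h0 ρ
        have hmem : s ∈ Set.Iic Real.pi := hs.2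
        have h2 : (∫ x in (0 : ℝ)..s, Q x) = primErr Q ρ ν s + ν * ((s ^ ρ : ℝ) : ℂ) := by
          rw [primErr, Set.indicator_of_mem hmem]; ring
        rw [h2, add_mul]
        refine (norm_add_le _ _).trans ?_
        rw [norm_mul, Complex.norm_real, Real.norm_of_nonneg hsp.le]
        gcongr
    set M := (K + ‖ν‖) * (ρ ^ ρ + 2 * κ * G) with hM
    have hM0 : 0 ≤ M := by positivity
    have ht := tendsto_kernelMass hP hQ
    have hd : 0 < δ / (2 * (M + 1)) := by positivity
    obtain ⟨C, hC⟩ := Filter.eventually_atTop.1 (((ht.eventually_le_const hd).and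
      (ht.eventually_le_const (by norm_num : (0 : ℝ) < 1 / 2))).and (Filter.eventually_gt_atTop 0))
    refine ⟨C, fun lam ha1 ha2 hCl => ?_⟩
    obtain ⟨hy0, hnorm⟩ := sector_bounds hε hε' ha1 ha2
    rw [abs_of_nonneg hy0] at hCl
    obtain ⟨⟨hb1, hb2⟩, hy⟩ := hC _ hCl
    rw [norm_weight lam hy.le]
    have hyρ : 0 < lam.im ^ ρ := Real.rpow_pos_of_pos hy ρ
    have hq0 : ∀ t ∈ Set.Icc 0 Real.pi, ‖qIter P Q lam 0 t‖ ≤ M / lam.im ^ ρ := by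
      intro t ht'
      rw [le_div_iff₀ hyρ, mul_comm]
      exact qIter_zero_bound P hQ hρ (by positivity) hF lam hy hnorm ht'
    have hqn := qIter_bound hP hQ lam _ hq0
    set a := kernelMass P Q lam.im with ha
    have ha0 : 0 ≤ a := kernelMass_nonneg P Q _
    have hsum : HasSum (fun n : ℕ => M / lam.im ^ ρ * a * a ^ n) (M / lam.im ^ ρ * a * (1 - a)⁻¹) :=
      (hasSum_geometric_of_lt_one ha0 (by linarith)).mul_left _
    have htsum : ‖∑' n : ℕ, qIter P Q lam (n + 1) Real.pi‖ ≤ M / lam.im ^ ρ * a * (1 - a)⁻¹ := by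
      refine tsum_of_norm_bounded hsum fun n => ?_
      refine (hqn (n + 1) Real.pi ⟨hπ.le, le_rfl⟩).trans (le_of_eq ?_)
      ring
    have hinv : (1 - a)⁻¹ ≤ 2 := by
      rw [inv_le_comm₀ (by linarith) two_pos]; linarith
    have hinv0 : 0 ≤ (1 - a)⁻¹ := inv_nonneg.2 (by linarith)
    calc _ ≤ lam.im ^ ρ * (M / lam.im ^ ρ * a * (1 - a)⁻¹) := by gcongr
      _ = M * a * (1 - a)⁻¹ := by field_simp
      _ ≤ M * (δ / (2 * (M + 1))) * 2 := by gcongr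
      _ = δ * (M / (M + 1)) := by field_simp
      _ ≤ δ * 1 := by
          gcongr
          rw [div_le_one (by positivity)]; linarith
      _ = δ := mul_one δ
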